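/- arXiv:2510.17435 — 3 statements merged into one kernel-verified Lean document; each statement's English description precedes it below -/
import Mathlib

section
/- For every instance of 5 agents on the unit circle, the expected social cost of the PCD mechanism is at most (7 − 4√2) times the optimal social cost: PCD ≤ (7 − 4√2) · OPT. -/
open Finset

/-- Position of agent `i` on the unit circle: the image of the partial sum
`∑_{j < i} d j`, so that `d i` is the clockwise arc from agent `i` to agent `i+1`. -/
noncomputable def pos (d : Fin 5 → ℝ) (i : Fin 5) : AddCircle (1 : ℝ) :=
  ((∑ j ∈ Finset.Iio i, d j : ℝ) : AddCircle (1 : ℝ))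

/-- Social cost of placing the facility at `a`. -/
noncomputable def SC (d : Fin 5 → ℝ) (a : AddCircle (1 : ℝ)) : ℝ :=
  ∑ i : Fin 5, dist (pos d i) a

/-- Social cost of placing the facility at agent `i`'s location. -/
noncomputable def C (d : Fin 5 → ℝ) (i : Fin 5) : ℝ := SC d (pos d i)

/-- The optimal social cost. -/
noncomputable def OPT (d : Fin 5 → ℝ) : ℝ := ⨅ a : AddCircle (1 : ℝ), SC d a

/-- The length of the arc facing agent `i` (indices mod 5). -/
noncomputable def P (d : Fin 5 → ℝ) (i : Fin 5) : ℝ := d (i + 2)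

/-- Expected social cost of the PCD mechanism. -/
noncomputable def PCD (d : Fin 5 → ℝ) : ℝ := ∑ i : Fin 5, P d i * C d i

lemma norm_sub_le_of_same {α β : ℝ} (h : 0 ≤ α * β) :
    ‖((α - β : ℝ) : AddCircle (1 : ℝ))‖ ≤ |(|α| - |β|)| := by
  have h1 : ‖((α - β : ℝ) : AddCircle (1 : ℝ))‖ ≤ |α - β| := by
    rw [UnitAddCircle.norm_eq]
    simpa using round_le (α - β) 0
  refine h1.trans (le_of_eq ?_)
  rcases le_total 0 α with ha | ha <;> rcases le_total 0 β with hb | hb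
  · rw [abs_of_nonneg ha, abs_of_nonneg hb]
  · have : α * β = 0 := le_antisymm (mul_nonpos_of_nonneg_of_nonpos ha hb) h
    rcases mul_eq_zero.mp this with h0 | h0 <;> simp [h0]
  · have : α * β = 0 := le_antisymm (mul_nonpos_of_nonpos_of_nonneg ha hb) h
    rcases mul_eq_zero.mp this with h0 | h0 <;> simp [h0]
  · rw [abs_of_nonpos ha, abs_of_nonpos hb, ← abs_neg]
    congr 1; ring

lemma exists_lift (A a : AddCircle (1 : ℝ)) :
    ∃ α : ℝ, (α : AddCircle (1 : ℝ)) = A - a ∧ dist A a = |α| := by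
  obtain ⟨y, hy⟩ := QuotientAddGroup.mk_surjective (A - a)
  refine ⟨y - round y, ?_, ?_⟩
  · have : ((round y : ℝ) : AddCircle (1 : ℝ)) = 0 := by
      rw [AddCircle.coe_eq_zero_iff]
      exact ⟨round y, by simp⟩
    rw [AddCircle.coe_sub, this, sub_zero]
    exact hy
  · rw [dist_eq_norm, ← hy]
    exact UnitAddCircle.norm_eq

lemma tri_same {A B Z a : AddCircle (1 : ℝ)} {α β : ℝ} (hα : (α : AddCircle (1 : ℝ)) = A - a)
    (hβ : (β : AddCircle (1 : ℝ)) = B - a) (dα : dist A a = |α|) (dβ : dist B a = |β|)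
    (h : 0 ≤ α * β) :
    dist A B + dist B Z ≤ dist A a + dist B a + dist Z a ∨
    dist A B + dist Z A ≤ dist A a + dist B a + dist Z a := by
  have h1 := norm_sub_le_of_same h
  have h2 : ((α - β : ℝ) : AddCircle (1 : ℝ)) = A - B := by
    rw [AddCircle.coe_sub, hα, hβ]; abel
  rw [h2, ← dist_eq_norm, ← dα, ← dβ] at h1
  have h3 := dist_triangle_right B Z a
  have h4 := dist_triangle_right Z A a
  have h6 := dist_nonneg (x := A) (y := a)
  have h7 := dist_nonneg (x := B) (y := a)
  rcases abs_cases (dist A a - dist B a) with ⟨h5, _⟩ | ⟨h5, _⟩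
  · left; linarith
  · right; linarith

/-- On the unit circle, for any point `a` and three points `A B Z`, the total distance to `a` is at
least the sum of two of the three sides of the triangle `A B Z`. -/
lemma tri (A B Z a : AddCircle (1 : ℝ)) :
    dist A B + dist B Z ≤ dist A a + dist B a + dist Z a ∨
    dist B Z + dist Z A ≤ dist A a + dist B a + dist Z a ∨
    dist A B + dist Z A ≤ dist A a + dist B a + dist Z a := by
  obtain ⟨α, hα, dα⟩ := exists_lift A a
  obtain ⟨β, hβ, dβ⟩ := exists_lift B a
  obtain ⟨ζ, hζ, dζ⟩ := exists_lift Z a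
  have h : 0 ≤ α * β ∨ 0 ≤ β * ζ ∨ 0 ≤ ζ * α := by
    by_contra! hc
    obtain ⟨h1, h2, h3⟩ := hc
    have h4 := mul_pos_of_neg_of_neg h1 h2
    have h5 := mul_neg_of_pos_of_neg h4 h3
    nlinarith [sq_nonneg (α * β * ζ)]
  rcases h with h | h | h
  · rcases tri_same (Z := Z) hα hβ dα dβ h with h | h
    · left; linarith
    · right; right; linarith
  · rcases tri_same (Z := A) hβ hζ dβ dζ h with h | h
    · right; left; linarith
    · left; linarith
  · rcases tri_same (Z := B) hζ hα dζ dα h with h | h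
    · right; right; linarith
    · right; left; linarith

lemma norm_coe_unit {x : ℝ} (h0 : 0 ≤ x) (h1 : x ≤ 1) :
    ‖(x : AddCircle (1 : ℝ))‖ = min x (1 - x) := by
  rcases le_total x (1 / 2) with h | h
  · rw [min_eq_left (by linarith), (AddCircle.norm_coe_eq_abs_iff (p := (1 : ℝ)) one_ne_zero).2,
      abs_of_nonneg h0]
    rw [abs_of_nonneg h0]; simpa using h
  · rw [min_eq_right (by linarith)]
    have h2 : (x : AddCircle (1 : ℝ)) = ((x - 1 : ℝ) : AddCircle (1 : ℝ)) := by
      rw [AddCircle.coe_sub, AddCircle.coe_period, sub_zero]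
    have h3 : |x - 1| = 1 - x := by rw [abs_of_nonpos (by linarith)]; ring
    rw [h2, (AddCircle.norm_coe_eq_abs_iff (p := (1 : ℝ)) one_ne_zero).2, h3]
    rw [h3, abs_one]; linarith

/-! ### Polynomial inequalities -/

lemma sqrt_two_facts : Real.sqrt 2 ^ 2 = 2 ∧ 1.414 ≤ Real.sqrt 2 ∧ Real.sqrt 2 ≤ 1.4143 := by
  refine ⟨Real.sq_sqrt (by norm_num), ?_, ?_⟩
  · apply Real.le_sqrt_of_sq_le; norm_num
  · rw [Real.sqrt_le_left (by norm_num)]; norm_num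

lemma key_aux {u v w r : ℝ} (hu : 0 ≤ u) (hv : 0 ≤ v) (hw : 0 ≤ w) (hr : r ^ 2 = 2)
    (hr1 : 1.414 ≤ r) (hr2 : r ≤ 1.4143) :
    4 * u * w + 2 * u * v ≤ (12 - 8 * r) * (u + v + w) * (2 * u + 2 * v + w) := by
  have e : (12 - 8 * r) * (u + v + w) * (2 * u + 2 * v + w) - (4 * u * w + 2 * u * v)
      = (12 - 8 * r) * (r * u - w) ^ 2 + (4 * (12 - 8 * r) - 2) * (u * v)
        + (12 - 8 * r) * (2 * v ^ 2 + 3 * (v * w)) := by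
    linear_combination (-(12 - 8 * r) * u ^ 2 - 16 * u * w) * hr
  have h1 : 0 ≤ 12 - 8 * r := by linarith
  have h2 : 0 ≤ 4 * (12 - 8 * r) - 2 := by linarith
  have : 0 ≤ (12 - 8 * r) * (r * u - w) ^ 2 + (4 * (12 - 8 * r) - 2) * (u * v)
        + (12 - 8 * r) * (2 * v ^ 2 + 3 * (v * w)) := by positivity
  linarith

lemma key {u v p q r : ℝ} (hu : 0 ≤ u) (hv : 0 ≤ v) (hp : 0 ≤ p) (hq : 0 ≤ q) (hr : r ^ 2 = 2)
    (hr1 : 1.414 ≤ r) (hr2 : r ≤ 1.4143) :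
    4 * u * q + 2 * u * v + 4 * p * v ≤
      (12 - 8 * r) * (u + v + p + q) * (2 * u + 2 * v + p + q) := by
  rcases le_total v u with h | h
  · have := key_aux (w := p + q) hu hv (by positivity) hr hr1 hr2
    have h2 := mul_le_mul_of_nonneg_left h hp
    linarith
  · have := key_aux (w := p + q) hv hu (by positivity) hr hr1 hr2
    have h2 := mul_le_mul_of_nonneg_left h hq
    linarith

/-- all agents on a half circle -/
lemma poly_line {u v p q m r : ℝ} (hu : 0 ≤ u) (hv : 0 ≤ v) (hp : 0 ≤ p) (hq : 0 ≤ q)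
    (hs : u + v + p + q + m = 1) (hm : 1 / 2 ≤ m) (hr : r ^ 2 = 2)
    (hr1 : 1.414 ≤ r) (hr2 : r ≤ 1.4143) :
    (1 - m + u + v) + 4 * u * q + 2 * u * v + 4 * p * v ≤ (7 - 4 * r) * (1 - m + u + v) := by
  have hk := key hu hv hp hq hr hr1 hr2
  have h1 : 0 ≤ (12 - 8 * r) * (2 * u + 2 * v + p + q) * (1 / 2 - (u + v + p + q)) := by
    have : 0 ≤ 12 - 8 * r := by linarith
    have : 0 ≤ 1 / 2 - (u + v + p + q) := by linarith
    positivity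
  obtain rfl : m = 1 - (u + v + p + q) := by linarith
  nlinarith

lemma poly_SS {u v p q m r : ℝ} (hu : 0 ≤ u) (hv : 0 ≤ v)
    (hs : u + v + p + q + m = 1) (hm : m ≤ 1 / 2) (h1 : 1 / 2 ≤ p + m) (h2 : 1 / 2 ≤ q + m)
    (hr : r ^ 2 = 2) (hr1 : 1.414 ≤ r) (hr2 : r ≤ 1.4143) :
    (1 - m + u + v) + 4 * u * q + 2 * u * v + 4 * p * v - (1 - 2 * m) * (u + v)
      ≤ (7 - 4 * r) * (1 - m + u + v) := by
  obtain ⟨g, hg⟩ : ∃ g, g = 1 - 2 * m := ⟨_, rfl⟩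
  obtain ⟨P', hP⟩ : ∃ P', P' = p - g / 2 := ⟨_, rfl⟩
  obtain ⟨Q', hQ⟩ : ∃ Q', Q' = q - g / 2 := ⟨_, rfl⟩
  have g0 : 0 ≤ g := by linarith
  have P0 : 0 ≤ P' := by linarith
  have Q0 : 0 ≤ Q' := by linarith
  have hk := key hu hv P0 Q0 hr hr1 hr2
  obtain rfl : p = P' + g / 2 := by linarith
  obtain rfl : q = Q' + g / 2 := by linarith
  obtain rfl : m = u + v + P' + Q' := by linarith
  obtain rfl : g = 1 - 2 * (u + v + P' + Q') := hg
  set g := 1 - 2 * (u + v + P' + Q') with hg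
  have c0 : 0 ≤ 12 - 8 * r := by linarith
  have c1 : 0 ≤ 2 * (12 - 8 * r) - 1 := by linarith
  have hpos : 0 ≤ (2 * (12 - 8 * r) - 1) * (g * (u + v))
    + (12 - 8 * r) * (3 / 2 * g * (P' + Q') + g ^ 2 / 2) := by positivity
  have e : (7 - 4 * r) * (1 - (u + v + P' + Q') + u + v) -
      ((1 - (u + v + P' + Q') + u + v) + 4 * u * (Q' + g / 2) + 2 * u * v + 4 * (P' + g / 2) * v
        - (1 - 2 * (u + v + P' + Q')) * (u + v))
      = ((12 - 8 * r) * (u + v + P' + Q') * (2 * u + 2 * v + P' + Q')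
          - (4 * u * Q' + 2 * u * v + 4 * P' * v))
        + ((2 * (12 - 8 * r) - 1) * (g * (u + v))
    + (12 - 8 * r) * (3 / 2 * g * (P' + Q') + g ^ 2 / 2)) := by
    rw [hg]; ring
  linarith

lemma poly_S {u v p q m r : ℝ} (hu : 0 ≤ u) (hv : 0 ≤ v) (hp : 0 ≤ p)
    (hs : u + v + p + q + m = 1) (h1 : p + m ≤ 1 / 2) (h2 : 1 / 2 ≤ q + m)
    (hr : r ^ 2 = 2) (hr1 : 1.414 ≤ r) (hr2 : r ≤ 1.4143) :
    (1 - m + u + v) + 4 * u * q + 2 * u * v + 4 * p * v - (1 - 2 * m) * (u + v)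
      - (1 - 2 * (m + p)) * (q + u) ≤ (7 - 4 * r) * (1 - m + u + v) := by
  obtain ⟨h, hh⟩ : ∃ h, h = 1 / 2 - m - p := ⟨_, rfl⟩
  obtain ⟨Q', hQ⟩ : ∃ Q', Q' = q - p - h := ⟨_, rfl⟩
  have h0 : 0 ≤ h := by linarith
  have Q0 : 0 ≤ Q' := by linarith
  have hk := key hu hv le_rfl Q0 hr hr1 hr2
  have hT : m = u + v + Q' - h := by linarith
  have hone : 2 * (u + v + Q') + 2 * p = 1 := by linarith
  obtain rfl : q = Q' + p + h := by linarith
  subst hT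
  obtain rfl : p = 1 / 2 - (u + v + Q') := by linarith
  set p := 1 / 2 - (u + v + Q') with hpd
  have c0 : 0 ≤ 12 - 8 * r := by linarith
  have c1 : 0 ≤ 3 * (12 - 8 * r) - 2 := by linarith
  have hpos : 0 ≤ (3 * (12 - 8 * r) - 2) * (p * (u + v))
    + (12 - 8 * r) * (3 * p * Q' + p * (u + v) + 2 * p ^ 2 + p * h + (u + v + Q') * h)
    + (2 * h * v + 2 * h * Q' + 2 * h ^ 2 + 2 * p * h) := by positivity
  have e : (7 - 4 * r) * (1 - (u + v + Q' - h) + u + v) -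
      ((1 - (u + v + Q' - h) + u + v) + 4 * u * (Q' + p + h) + 2 * u * v + 4 * p * v
        - (1 - 2 * (u + v + Q' - h)) * (u + v)
        - (1 - 2 * (u + v + Q' - h + p)) * (Q' + p + h + u))
      = ((12 - 8 * r) * (u + v + 0 + Q') * (2 * u + 2 * v + 0 + Q')
          - (4 * u * Q' + 2 * u * v + 4 * 0 * v))
        + ((3 * (12 - 8 * r) - 2) * (p * (u + v))
    + (12 - 8 * r) * (3 * p * Q' + p * (u + v) + 2 * p ^ 2 + p * h + (u + v + Q') * h)
    + (2 * h * v + 2 * h * Q' + 2 * h ^ 2 + 2 * p * h)) := by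
    rw [hpd]; ring
  linarith

lemma poly_N (d0 d1 d2 d3 d4 : ℝ) (hs : d0 + d1 + d2 + d3 + d4 = 1) :
    d0 * (d2 + d3) + d1 * (d3 + d4) + d2 * (d4 + d0) + d3 * (d0 + d1) + d4 * (d1 + d2)
    + (d0 + d1) * (d2 + d4) + (d1 + d2) * (d3 + d0) + (d2 + d3) * (d4 + d1)
    + (d3 + d4) * (d0 + d2) + (d4 + d0) * (d1 + d3) ≤ 6 / 5 := by
  have h1 : (d0 + d1 + d2 + d3 + d4) ^ 2 = 1 := by rw [hs]; norm_num
  linarith [sq_nonneg (2 * d0 - d2 - d3), sq_nonneg (2 * d1 - d3 - d4),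
    sq_nonneg (2 * d2 - d4 - d0), sq_nonneg (2 * d3 - d0 - d1), sq_nonneg (2 * d4 - d1 - d2)]

/-! ### Configurations on the circle -/

/-- Five points on the circle with the given cyclic gaps. -/
structure Conf (d : Fin 5 → ℝ) (X : Fin 5 → AddCircle (1 : ℝ)) : Prop where
  nonneg : ∀ i, 0 ≤ d i
  sum : ∑ i, d i = 1
  near : ∀ i, dist (X i) (X (i + 1)) = min (d i) (1 - d i)
  far : ∀ i, dist (X i) (X (i + 2)) = min (d i + d (i + 1)) (1 - (d i + d (i + 1)))

/-- The expected cost. -/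
noncomputable def cost (d : Fin 5 → ℝ) (X : Fin 5 → AddCircle (1 : ℝ)) : ℝ :=
  ∑ i, d (i + 2) * ∑ j, dist (X j) (X i)

lemma Conf.rot {d : Fin 5 → ℝ} {X : Fin 5 → AddCircle (1 : ℝ)} (h : Conf d X) (k : Fin 5) :
    Conf (fun i => d (i + k)) (fun i => X (i + k)) where
  nonneg i := h.nonneg _
  sum := (Equiv.sum_comp (Equiv.addRight k) d).trans h.sum
  near i := by
    have := h.near (i + k)
    rwa [add_right_comm] at this
  far i := by
    have := h.far (i + k)
    rwa [add_right_comm, add_right_comm i k 1] at this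

lemma cost_rot (d : Fin 5 → ℝ) (X : Fin 5 → AddCircle (1 : ℝ)) (k : Fin 5) :
    cost (fun i => d (i + k)) (fun i => X (i + k)) = cost d X := by
  unfold cost
  rw [← Equiv.sum_comp (Equiv.addRight k) (fun i => d (i + 2) * ∑ j, dist (X j) (X i))]
  refine Finset.sum_congr rfl fun i _ => ?_
  rw [← Equiv.sum_comp (Equiv.addRight k) (fun j => dist (X j) (X (Equiv.addRight k i)))]
  simp only [Equiv.coe_addRight, add_right_comm]

lemma dist_rot (X : Fin 5 → AddCircle (1 : ℝ)) (a : AddCircle (1 : ℝ)) (k : Fin 5) :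
    ∑ i, dist (X (i + k)) a = ∑ i, dist (X i) a :=
  Equiv.sum_comp (Equiv.addRight k) (fun i => dist (X i) a)

lemma cost_le {d : Fin 5 → ℝ} {X : Fin 5 → AddCircle (1 : ℝ)} (hd : ∀ i, 0 ≤ d i)
    {a01 a12 a23 a34 a40 a02 a13 a24 a30 a41 : ℝ}
    (h01 : dist (X 0) (X 1) ≤ a01) (h12 : dist (X 1) (X 2) ≤ a12)
    (h23 : dist (X 2) (X 3) ≤ a23) (h34 : dist (X 3) (X 4) ≤ a34)
    (h40 : dist (X 4) (X 0) ≤ a40) (h02 : dist (X 0) (X 2) ≤ a02)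
    (h13 : dist (X 1) (X 3) ≤ a13) (h24 : dist (X 2) (X 4) ≤ a24)
    (h30 : dist (X 3) (X 0) ≤ a30) (h41 : dist (X 4) (X 1) ≤ a41) :
    cost d X ≤ a01 * (d 2 + d 3) + a12 * (d 3 + d 4) + a23 * (d 4 + d 0) + a34 * (d 0 + d 1)
      + a40 * (d 1 + d 2) + a02 * (d 2 + d 4) + a13 * (d 3 + d 0) + a24 * (d 4 + d 1)
      + a30 * (d 0 + d 2) + a41 * (d 1 + d 3) := by
  have e : cost d X = dist (X 0) (X 1) * (d 2 + d 3) + dist (X 1) (X 2) * (d 3 + d 4)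
      + dist (X 2) (X 3) * (d 4 + d 0) + dist (X 3) (X 4) * (d 0 + d 1)
      + dist (X 4) (X 0) * (d 1 + d 2) + dist (X 0) (X 2) * (d 2 + d 4)
      + dist (X 1) (X 3) * (d 3 + d 0) + dist (X 2) (X 4) * (d 4 + d 1)
      + dist (X 3) (X 0) * (d 0 + d 2) + dist (X 4) (X 1) * (d 1 + d 3) := by
    unfold cost
    simp only [Fin.sum_univ_five, dist_self]
    rw [dist_comm (X 1) (X 0), dist_comm (X 2) (X 1), dist_comm (X 3) (X 2), dist_comm (X 4) (X 3),
      dist_comm (X 0) (X 4), dist_comm (X 2) (X 0), dist_comm (X 3) (X 1), dist_comm (X 4) (X 2),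
      dist_comm (X 0) (X 3), dist_comm (X 1) (X 4)]
    have e0 : (0 + 2 : Fin 5) = 2 := rfl
    have e1 : (1 + 2 : Fin 5) = 3 := rfl
    have e2 : (2 + 2 : Fin 5) = 4 := rfl
    have e3 : (3 + 2 : Fin 5) = 0 := rfl
    have e4 : (4 + 2 : Fin 5) = 1 := rfl
    rw [e0, e1, e2, e3, e4]
    ring
  have H : ∀ i j, 0 ≤ d i + d j := fun i j => add_nonneg (hd i) (hd j)
  rw [e]
  gcongr <;> apply H

/-- The explicit list of pairwise distances. -/
lemma Conf.explicit {d : Fin 5 → ℝ} {X : Fin 5 → AddCircle (1 : ℝ)} (h : Conf d X) :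
    (dist (X 0) (X 1) = min (d 0) (1 - d 0) ∧ dist (X 1) (X 2) = min (d 1) (1 - d 1) ∧
      dist (X 2) (X 3) = min (d 2) (1 - d 2) ∧ dist (X 3) (X 4) = min (d 3) (1 - d 3) ∧
      dist (X 4) (X 0) = min (d 4) (1 - d 4)) ∧
    dist (X 0) (X 2) = min (d 0 + d 1) (1 - (d 0 + d 1)) ∧
    dist (X 1) (X 3) = min (d 1 + d 2) (1 - (d 1 + d 2)) ∧
    dist (X 2) (X 4) = min (d 2 + d 3) (1 - (d 2 + d 3)) ∧
    dist (X 3) (X 0) = min (d 3 + d 4) (1 - (d 3 + d 4)) ∧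
    dist (X 4) (X 1) = min (d 4 + d 0) (1 - (d 4 + d 0)) :=
  ⟨⟨h.near 0, h.near 1, h.near 2, h.near 3, h.near 4⟩,
    h.far 0, h.far 1, h.far 2, h.far 3, h.far 4⟩

/-- No two consecutive gaps exceed a half circle. -/
lemma caseN {d : Fin 5 → ℝ} {X : Fin 5 → AddCircle (1 : ℝ)} (h : Conf d X)
    (hs : ∀ i, d i + d (i + 1) ≤ 1 / 2) (a : AddCircle (1 : ℝ)) :
    cost d X ≤ (7 - 4 * Real.sqrt 2) * ∑ i, dist (X i) a := by
  obtain ⟨⟨h01, h12, h23, h34, h40⟩, h02, h13, h24, h30, h41⟩ := h.explicit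
  obtain ⟨hr, hr1, hr2⟩ := sqrt_two_facts
  have hsum := h.sum
  rw [Fin.sum_univ_five] at hsum ⊢
  have s0 : d 0 + d 1 ≤ 1 / 2 := hs 0
  have s1 : d 1 + d 2 ≤ 1 / 2 := hs 1
  have s2 : d 2 + d 3 ≤ 1 / 2 := hs 2
  have s3 : d 3 + d 4 ≤ 1 / 2 := hs 3
  have s4 : d 4 + d 0 ≤ 1 / 2 := hs 4
  have hc := cost_le h.nonneg (h01.trans_le (min_le_left _ _)) (h12.trans_le (min_le_left _ _))
    (h23.trans_le (min_le_left _ _)) (h34.trans_le (min_le_left _ _))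
    (h40.trans_le (min_le_left _ _)) (h02.trans_le (min_le_left _ _))
    (h13.trans_le (min_le_left _ _)) (h24.trans_le (min_le_left _ _))
    (h30.trans_le (min_le_left _ _)) (h41.trans_le (min_le_left _ _))
  have hN := poly_N _ _ _ _ _ hsum
  rw [min_eq_left (by linarith)] at h02 h13 h24 h30 h41
  have t1 := dist_triangle_right (X 0) (X 2) a
  have t2 := dist_triangle_right (X 1) (X 3) a
  have t3 := dist_triangle_right (X 2) (X 4) a
  have t4 := dist_triangle_right (X 3) (X 0) a
  have t5 := dist_triangle_right (X 4) (X 1) a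
  have hS : 1 ≤ dist (X 0) a + dist (X 1) a + dist (X 2) a + dist (X 3) a + dist (X 4) a := by
    linarith
  nlinarith

/-- Two overlapping pairs of gaps exceed a half circle. -/
lemma caseSS {d : Fin 5 → ℝ} {X : Fin 5 → AddCircle (1 : ℝ)} (h : Conf d X)
    (s1 : 1 / 2 ≤ d 1 + d 2) (s2 : 1 / 2 ≤ d 2 + d 3) (a : AddCircle (1 : ℝ)) :
    cost d X ≤ (7 - 4 * Real.sqrt 2) * ∑ i, dist (X i) a := by
  obtain ⟨⟨h01, h12, h23, h34, h40⟩, h02, h13, h24, h30, h41⟩ := h.explicit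
  obtain ⟨hr, hr1, hr2⟩ := sqrt_two_facts
  have hsum := h.sum
  rw [Fin.sum_univ_five] at hsum ⊢
  have hS : 1 - d 2 + d 0 + d 4 ≤
      dist (X 0) a + dist (X 1) a + dist (X 2) a + dist (X 3) a + dist (X 4) a := by
    have t1 := dist_triangle_right (X 1) (X 3) a
    have t2 := dist_triangle_right (X 2) (X 4) a
    rw [h13, min_eq_right (by linarith)] at t1
    rw [h24, min_eq_right (by linarith)] at t2
    have := dist_nonneg (x := X 0) (y := a)
    linarith
  have hα : 0 ≤ 7 - 4 * Real.sqrt 2 := by linarith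
  refine le_trans ?_ (mul_le_mul_of_nonneg_left hS hα)
  have hd1 : d 2 = 1 - d 0 - d 1 - d 3 - d 4 := by linarith
  rcases le_total (1 / 2) (d 2) with hm | hm
  · refine le_trans ?_ (poly_line (h.nonneg 0) (h.nonneg 4) (h.nonneg 1) (h.nonneg 3)
      (by linarith) hm hr hr1 hr2)
    have hc := cost_le h.nonneg (h01.trans_le (min_le_left _ _)) (h12.trans_le (min_le_left _ _))
      (h23.trans_le (min_le_right _ _)) (h34.trans_le (min_le_left _ _))
      (h40.trans_le (min_le_left _ _)) (h02.trans_le (min_le_left _ _))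
      (h13.trans_le (min_le_right _ _)) (h24.trans_le (min_le_right _ _))
      (h30.trans_le (min_le_left _ _)) (h41.trans_le (min_le_left _ _))
    refine hc.trans (le_of_eq ?_)
    rw [hd1]; ring
  · refine le_trans ?_ (poly_SS (h.nonneg 0) (h.nonneg 4) (p := d 1) (q := d 3)
      (by linarith) hm (by linarith) (by linarith) hr hr1 hr2)
    have hc := cost_le h.nonneg (h01.trans_le (min_le_left _ _)) (h12.trans_le (min_le_left _ _))
      (h23.trans_le (min_le_left _ _)) (h34.trans_le (min_le_left _ _))
      (h40.trans_le (min_le_left _ _)) (h02.trans_le (min_le_left _ _))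
      (h13.trans_le (min_le_right _ _)) (h24.trans_le (min_le_right _ _))
      (h30.trans_le (min_le_left _ _)) (h41.trans_le (min_le_left _ _))
    refine hc.trans (le_of_eq ?_)
    rw [hd1]; ring

/-- Exactly one pair of consecutive gaps exceeds a half circle. -/
lemma caseS {d : Fin 5 → ℝ} {X : Fin 5 → AddCircle (1 : ℝ)} (h : Conf d X)
    (s1 : d 1 + d 2 ≤ 1 / 2) (s2 : 1 / 2 ≤ d 2 + d 3) (s3 : d 3 + d 4 ≤ 1 / 2)
    (a : AddCircle (1 : ℝ)) :
    cost d X ≤ (7 - 4 * Real.sqrt 2) * ∑ i, dist (X i) a := by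
  obtain ⟨⟨h01, h12, h23, h34, h40⟩, h02, h13, h24, h30, h41⟩ := h.explicit
  obtain ⟨hr, hr1, hr2⟩ := sqrt_two_facts
  have hsum := h.sum
  rw [Fin.sum_univ_five] at hsum ⊢
  have n0 := h.nonneg 0
  have n1 := h.nonneg 1
  have n4 := h.nonneg 4
  have hα : 0 ≤ 7 - 4 * Real.sqrt 2 := by linarith
  have hd1 : d 2 = 1 - d 0 - d 1 - d 3 - d 4 := by linarith
  have hc := cost_le h.nonneg (h01.trans_le (min_le_left _ _)) (h12.trans_le (min_le_left _ _))
    (h23.trans_le (min_le_left _ _)) (h34.trans_le (min_le_left _ _))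
    (h40.trans_le (min_le_left _ _)) (h02.trans_le (min_le_left _ _))
    (h13.trans_le (min_le_left _ _)) (h24.trans_le (min_le_right _ _))
    (h30.trans_le (min_le_left _ _)) (h41.trans_le (min_le_left _ _))
  have t2 := dist_triangle_right (X 2) (X 4) a
  rw [h24, min_eq_right (by linarith)] at t2
  have ht := tri (X 0) (X 1) (X 3) a
  rw [h01, h13, h30, min_eq_left (by linarith), min_eq_left (by linarith),
    min_eq_left (by linarith)] at ht
  rcases ht with ht | ht | ht
  · have hS : 1 - d 3 + d 0 + d 1 ≤
      dist (X 0) a + dist (X 1) a + dist (X 2) a + dist (X 3) a + dist (X 4) a := by linarith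
    refine le_trans ?_ (mul_le_mul_of_nonneg_left hS hα)
    refine le_trans ?_ (poly_S n0 n1 n4 (q := d 2)
      (by linarith) (by linarith) (by linarith) hr hr1 hr2)
    refine hc.trans (le_of_eq ?_)
    rw [hd1]; ring
  · have hS : 1 ≤
      dist (X 0) a + dist (X 1) a + dist (X 2) a + dist (X 3) a + dist (X 4) a := by linarith
    have hN := poly_N _ _ _ _ _ hsum
    have hx : 0 ≤ (2 * (d 2 + d 3) - 1) * (d 4 + d 1) :=
      mul_nonneg (by linarith) (by linarith)
    have := mul_le_mul_of_nonneg_left hS hα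
    linarith
  · have hS : 1 - d 2 + d 0 + d 4 ≤
      dist (X 0) a + dist (X 1) a + dist (X 2) a + dist (X 3) a + dist (X 4) a := by linarith
    refine le_trans ?_ (mul_le_mul_of_nonneg_left hS hα)
    refine le_trans ?_ (poly_S n0 n4 n1 (q := d 3)
      (by linarith) (by linarith) (by linarith) hr hr1 hr2)
    refine hc.trans (le_of_eq ?_)
    rw [hd1]; ring

lemma case_two {d : Fin 5 → ℝ} {X : Fin 5 → AddCircle (1 : ℝ)} (h : Conf d X)
    (s2 : 1 / 2 ≤ d 2 + d 3) (a : AddCircle (1 : ℝ)) :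
    cost d X ≤ (7 - 4 * Real.sqrt 2) * ∑ i, dist (X i) a := by
  rcases le_total (1 / 2) (d 1 + d 2) with s1 | s1
  · exact caseSS h s1 s2 a
  rcases le_total (1 / 2) (d 3 + d 4) with s3 | s3
  · have := caseSS (h.rot 1) s2 s3 a
    rwa [cost_rot, dist_rot X a 1] at this
  · exact caseS h s1 s2 s3 a

lemma case_all {d : Fin 5 → ℝ} {X : Fin 5 → AddCircle (1 : ℝ)} (h : Conf d X)
    (a : AddCircle (1 : ℝ)) :
    cost d X ≤ (7 - 4 * Real.sqrt 2) * ∑ i, dist (X i) a := by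
  by_cases hs : ∀ i, d i + d (i + 1) ≤ 1 / 2
  · exact caseN h hs a
  · push Not at hs
    obtain ⟨i, hi⟩ := hs
    have e2 : 2 + (i - 2) = i := by abel
    have e3 : 3 + (i - 2) = i + 1 := by
      have : (3 : Fin 5) = 1 + 2 := rfl
      rw [this]; abel
    have := case_two (h.rot (i - 2)) (by simpa only [e2, e3] using hi.le) a
    rwa [cost_rot, dist_rot X a (i - 2)] at this

lemma conf_pos (d : Fin 5 → ℝ) (hd : ∀ i, 0 ≤ d i) (hsum : ∑ i, d i = 1) : Conf d (pos d) := by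
  have hs := hsum
  rw [Fin.sum_univ_five] at hs
  have n0 := hd 0
  have n1 := hd 1
  have n2 := hd 2
  have n3 := hd 3
  have n4 := hd 4
  have p0 : pos d 0 = ((0 : ℝ) : AddCircle (1 : ℝ)) := by
    unfold pos; congr 1
  have p1 : pos d 1 = ((d 0 : ℝ) : AddCircle (1 : ℝ)) := by
    unfold pos; congr 1
    rw [show Finset.Iio (1 : Fin 5) = {0} from rfl]; simp
  have p2 : pos d 2 = ((d 0 + d 1 : ℝ) : AddCircle (1 : ℝ)) := by
    unfold pos; congr 1
    rw [show Finset.Iio (2 : Fin 5) = {0, 1} from rfl]; simp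
  have p3 : pos d 3 = ((d 0 + d 1 + d 2 : ℝ) : AddCircle (1 : ℝ)) := by
    unfold pos; congr 1
    rw [show Finset.Iio (3 : Fin 5) = {0, 1, 2} from rfl]; simp [add_assoc]
  have p4 : pos d 4 = ((d 0 + d 1 + d 2 + d 3 : ℝ) : AddCircle (1 : ℝ)) := by
    unfold pos; congr 1
    rw [show Finset.Iio (4 : Fin 5) = {0, 1, 2, 3} from rfl]; simp [add_assoc]
  have key : ∀ x y g : ℝ, 0 ≤ g → g ≤ 1 → y - x = g ∨ x - y = 1 - g →
      dist (x : AddCircle (1 : ℝ)) (y : AddCircle (1 : ℝ)) = min g (1 - g) := by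
    intro x y g g0 g1 hxy
    rcases hxy with hxy | hxy
    · rw [dist_comm, dist_eq_norm, ← AddCircle.coe_sub, hxy, norm_coe_unit g0 g1]
    · rw [dist_eq_norm, ← AddCircle.coe_sub, hxy, norm_coe_unit (by linarith) (by linarith),
        min_comm]
      congr 1; ring
  refine ⟨hd, hsum, ?_, ?_⟩
  · intro i
    fin_cases i
    · change dist (pos d 0) (pos d 1) = min (d 0) (1 - d 0)
      rw [p0, p1]; exact key _ _ _ (by linarith) (by linarith) (Or.inl (by linarith))
    · change dist (pos d 1) (pos d 2) = min (d 1) (1 - d 1)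
      rw [p1, p2]; exact key _ _ _ (by linarith) (by linarith) (Or.inl (by linarith))
    · change dist (pos d 2) (pos d 3) = min (d 2) (1 - d 2)
      rw [p2, p3]; exact key _ _ _ (by linarith) (by linarith) (Or.inl (by linarith))
    · change dist (pos d 3) (pos d 4) = min (d 3) (1 - d 3)
      rw [p3, p4]; exact key _ _ _ (by linarith) (by linarith) (Or.inl (by linarith))
    · change dist (pos d 4) (pos d 0) = min (d 4) (1 - d 4)
      rw [p4, p0]; exact key _ _ _ (by linarith) (by linarith) (Or.inr (by linarith))
  · intro i
    fin_cases i
    · change dist (pos d 0) (pos d 2) = min (d 0 + d 1) (1 - (d 0 + d 1))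
      rw [p0, p2]; exact key _ _ _ (by linarith) (by linarith) (Or.inl (by linarith))
    · change dist (pos d 1) (pos d 3) = min (d 1 + d 2) (1 - (d 1 + d 2))
      rw [p1, p3]; exact key _ _ _ (by linarith) (by linarith) (Or.inl (by linarith))
    · change dist (pos d 2) (pos d 4) = min (d 2 + d 3) (1 - (d 2 + d 3))
      rw [p2, p4]; exact key _ _ _ (by linarith) (by linarith) (Or.inl (by linarith))
    · change dist (pos d 3) (pos d 0) = min (d 3 + d 4) (1 - (d 3 + d 4))
      rw [p3, p0]; exact key _ _ _ (by linarith) (by linarith) (Or.inr (by linarith))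
    · change dist (pos d 4) (pos d 1) = min (d 4 + d 0) (1 - (d 4 + d 0))
      rw [p4, p1]; exact key _ _ _ (by linarith) (by linarith) (Or.inr (by linarith))

theorem pcd_five_agents_approx (d : Fin 5 → ℝ) (hd : ∀ i, 0 ≤ d i)
    (hsum : ∑ i, d i = 1) :
    PCD d ≤ (7 - 4 * Real.sqrt 2) * OPT d := by
  have hα : 0 ≤ 7 - 4 * Real.sqrt 2 := by
    obtain ⟨_, _, h⟩ := sqrt_two_facts
    linarith
  unfold OPT
  rw [Real.mul_iInf_of_nonneg hα]
  exact le_ciInf fun a => case_all (conf_pos d hd hsum) a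
end

section
/- First-order condition at an optimum: let x : Fin n → AddCircle (1 : ℝ) be agent locations and let a be an optimal location (∀ b, ∑ j, dist(x j, a) ≤ ∑ j, dist(x j, b)). Define the cardinalities R = |{j : r(x j − a) ∈ (0, 1/2)}|, L = |{j : r(x j − a) ∈ (1/2, 1)}|, A = |{j : r(x j − a) = 1/2}|, B = |{j : x j = a}|. Then R − L + B − A ≥ 0 and L − R + B − A ≥ 0; in particular |L − R| ≤ B − A (as integers). -/
instance : Fact ((0 : ℝ) < 1) := ⟨zero_lt_one⟩

/-- The canonical representative in `[0, 1)` of a point on the unit circle. -/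
noncomputable def rep (y : AddCircle (1 : ℝ)) : ℝ :=
  ((AddCircle.equivIco 1 0) y : ℝ)

open Classical in
/-- The one-sided slope of the distance to `a` when moving clockwise (`s = 1`) or
counterclockwise (`s = -1`), for an agent at relative position `y`. -/
noncomputable def slope1 (s : ℤ) (y : AddCircle (1 : ℝ)) : ℤ :=
  s * ((if rep y ∈ Set.Ioo (1 / 2 : ℝ) 1 then 1 else 0) -
    (if rep y ∈ Set.Ioo (0 : ℝ) (1 / 2) then 1 else 0)) +
    (if y = 0 then 1 else 0) - (if rep y = 1 / 2 then 1 else 0)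

lemma rep_mem (y : AddCircle (1 : ℝ)) : 0 ≤ rep y ∧ rep y < 1 := by
  have h := (AddCircle.equivIco 1 0 y).2
  simpa [rep] using h

lemma coe_rep (y : AddCircle (1 : ℝ)) : ((rep y : ℝ) : AddCircle (1 : ℝ)) = y :=
  AddCircle.coe_equivIco

lemma rep_eq_zero (y : AddCircle (1 : ℝ)) : y = 0 ↔ rep y = 0 := by
  constructor
  · rintro rfl
    have := AddCircle.coe_equivIco_mk_apply (1 : ℝ) (0 : ℝ)
    simpa [rep] using this
  · intro h
    rw [← coe_rep y, h]; simp

lemma norm_le_abs (u : ℝ) : ‖(u : AddCircle (1 : ℝ))‖ ≤ |u| := by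
  rw [AddCircle.norm_eq]
  simpa using round_le u 0

lemma norm_le_abs' (u : ℝ) : ‖(u : AddCircle (1 : ℝ))‖ ≤ |u - 1| := by
  rw [AddCircle.norm_eq]
  simpa using round_le u 1

lemma norm_small (u : ℝ) (h : |u| ≤ 1 / 2) : ‖(u : AddCircle (1 : ℝ))‖ = |u| := by
  rw [AddCircle.norm_coe_eq_abs_iff (1 : ℝ) one_ne_zero]; simpa using h

lemma norm_eq_one_sub (u : ℝ) (h : 1 / 2 ≤ u) (h1 : u ≤ 1) :
    ‖(u : AddCircle (1 : ℝ))‖ = 1 - u := by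
  have h2 := norm_small (u - 1) (by rw [abs_le]; constructor <;> linarith)
  have : ((u - 1 : ℝ) : AddCircle (1 : ℝ)) = u := by
    rw [AddCircle.coe_sub, AddCircle.coe_period, sub_zero]
  rw [this, abs_of_nonpos (by linarith)] at h2
  linarith

lemma slope_bound (s : ℤ) (hs : s = 1 ∨ s = -1) (y : AddCircle (1 : ℝ)) :
    ∀ᶠ t : ℝ in nhdsWithin 0 (Set.Ioi 0),
      ‖y - ((s * t : ℝ) : AddCircle (1 : ℝ))‖ ≤ ‖y‖ + slope1 s y * t := by
  obtain ⟨h0, h1⟩ := rep_mem y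
  have hy := coe_rep y
  have hz := rep_eq_zero y
  have key : ∀ t : ℝ, ‖y - ((s * t : ℝ) : AddCircle (1 : ℝ))‖ ≤ |rep y - s * t| ∧
      ‖y - ((s * t : ℝ) : AddCircle (1 : ℝ))‖ ≤ |rep y - s * t - 1| := by
    intro t
    have : y - ((s * t : ℝ) : AddCircle (1 : ℝ)) = ((rep y - s * t : ℝ) : AddCircle (1 : ℝ)) := by
      rw [AddCircle.coe_sub, hy]
    rw [this]
    exact ⟨norm_le_abs _, norm_le_abs' _⟩
  have hn1 : rep y ≤ 1 / 2 → ‖y‖ = rep y := by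
    intro h
    have := norm_small (rep y) (by rwa [abs_of_nonneg h0])
    rwa [hy, abs_of_nonneg h0] at this
  have hn2 : 1 / 2 ≤ rep y → ‖y‖ = 1 - rep y := by
    intro h
    have := norm_eq_one_sub (rep y) h h1.le
    rwa [hy] at this
  have hm : (0 : ℝ) < 1 - rep y := by linarith
  have e0 : ∀ᶠ t : ℝ in nhdsWithin 0 (Set.Ioi 0), 0 < t := eventually_mem_nhdsWithin
  have e1 : ∀ c : ℝ, 0 < c → ∀ᶠ t : ℝ in nhdsWithin 0 (Set.Ioi 0), t < c := fun c hc =>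
    nhdsWithin_le_nhds (eventually_lt_nhds hc)
  unfold slope1
  rcases h0.eq_or_lt with h | h
  · filter_upwards [e0] with t ht
    have k := (key t).1
    have := hn1 (by linarith)
    rw [← h] at k this hz
    simp only [← h, this, hz]
    rcases hs with rfl | rfl <;> norm_num at k ⊢ <;> rw [abs_of_pos ht] at k <;> linarith
  · filter_upwards [e0, e1 _ h, e1 _ hm] with t ht ht1 ht2
    have hy0 : ¬ (y = 0) := by rw [hz]; exact h.ne'
    obtain ⟨k1, k2⟩ := key t
    rcases lt_trichotomy (rep y) (1 / 2) with g | g | g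
    · have := hn1 g.le
      rw [if_neg (by simp; intro; linarith), if_pos ⟨h, g⟩, if_neg hy0, if_neg g.ne, this]
      rcases hs with rfl | rfl <;> norm_num at k1 ⊢ <;> rw [abs_of_pos (by linarith)] at k1 <;>
        linarith
    · have := hn1 g.le
      rw [if_neg (by simp; intro; linarith), if_neg (by simp; intro; linarith), if_neg hy0,
        if_pos g, this]
      rcases hs with rfl | rfl <;> norm_num at k1 k2 ⊢
      · rw [abs_of_pos (by linarith)] at k1
        linarith
      · rw [abs_of_neg (by linarith)] at k2
        linarith
    · have := hn2 g.le
      rw [if_pos ⟨g, h1⟩, if_neg (by simp; intro; linarith), if_neg hy0, if_neg g.ne', this]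
      rcases hs with rfl | rfl <;> norm_num at k2 ⊢ <;> rw [abs_of_neg (by linarith)] at k2 <;>
        linarith

lemma slope_sum_nonneg (n : ℕ) (x : Fin n → AddCircle (1 : ℝ)) (a : AddCircle (1 : ℝ))
    (hopt : ∀ b : AddCircle (1 : ℝ), ∑ j, dist (x j) a ≤ ∑ j, dist (x j) b)
    (s : ℤ) (hs : s = 1 ∨ s = -1) : 0 ≤ ∑ j, slope1 s (x j - a) := by
  have e : ∀ᶠ t : ℝ in nhdsWithin 0 (Set.Ioi 0), ∀ j,
      ‖x j - a - ((s * t : ℝ) : AddCircle (1 : ℝ))‖ ≤ ‖x j - a‖ + slope1 s (x j - a) * t :=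
    Filter.eventually_all.2 fun j => slope_bound s hs _
  obtain ⟨t, ht, h0⟩ := (e.and eventually_mem_nhdsWithin).exists
  have h0 : 0 < t := h0
  have h := hopt (a + ((s * t : ℝ) : AddCircle (1 : ℝ)))
  have h2 : ∑ j, dist (x j) (a + ((s * t : ℝ) : AddCircle (1 : ℝ))) ≤
      ∑ j, (dist (x j) a + slope1 s (x j - a) * t) := by
    refine Finset.sum_le_sum fun j _ => ?_
    rw [dist_eq_norm, dist_eq_norm, ← sub_sub]
    exact ht j
  rw [Finset.sum_add_distrib, ← Finset.sum_mul] at h2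
  have h3 : 0 ≤ (∑ j, (slope1 s (x j - a) : ℝ)) * t := by linarith
  have h4 := nonneg_of_mul_nonneg_left h3 h0
  exact_mod_cast h4

open Classical in
lemma ncard_eq_sum (n : ℕ) (p : Fin n → Prop) :
    (({j | p j} : Set (Fin n)).ncard : ℤ) = ∑ j, if p j then 1 else 0 := by
  rw [Set.ncard_eq_toFinset_card']
  simp

theorem first_order_condition_at_optimum (n : ℕ)
    (x : Fin n → AddCircle (1 : ℝ)) (a : AddCircle (1 : ℝ))
    (hopt : ∀ b : AddCircle (1 : ℝ), ∑ j, dist (x j) a ≤ ∑ j, dist (x j) b)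
    (R L A B : ℤ)
    (hR : R = ({j | rep (x j - a) ∈ Set.Ioo (0 : ℝ) (1 / 2)} : Set (Fin n)).ncard)
    (hL : L = ({j | rep (x j - a) ∈ Set.Ioo (1 / 2 : ℝ) 1} : Set (Fin n)).ncard)
    (hA : A = ({j | rep (x j - a) = 1 / 2} : Set (Fin n)).ncard)
    (hB : B = ({j | x j = a} : Set (Fin n)).ncard) :
    0 ≤ R - L + B - A ∧ 0 ≤ L - R + B - A ∧ |L - R| ≤ B - A := by
  have key : ∀ s : ℤ, ∑ j, slope1 s (x j - a) = s * (L - R) + B - A := by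
    intro s
    rw [ncard_eq_sum] at hR hL hA hB
    unfold slope1
    rw [Finset.sum_sub_distrib, Finset.sum_add_distrib, ← Finset.mul_sum, Finset.sum_sub_distrib,
      hR, hL, hA, hB]
    simp only [sub_eq_zero]
    congr!
  have h1 := slope_sum_nonneg n x a hopt 1 (Or.inl rfl)
  have h2 := slope_sum_nonneg n x a hopt (-1) (Or.inr rfl)
  rw [key] at h1 h2
  refine ⟨by linarith, by linarith, ?_⟩
  rw [abs_le]
  constructor <;> linarith
end

section
/- Near-equidistant corollary: for any 5-agent instance with |P i − 1/5| ≤ 1/10 for all i, PCD ≤ (4/3) · OPT (and in particular PCD ≤ 1.34 · OPT). -/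
open Finset

/-- Lower bound for the circle norm of a real in `[0,1]`. -/
lemma circ_lower (u : ℝ) (h0 : 0 ≤ u) (h1 : u ≤ 1) :
    (u ≤ ‖(u : AddCircle (1 : ℝ))‖ ∧ u ≤ 1 / 2) ∨
    (1 - u ≤ ‖(u : AddCircle (1 : ℝ))‖ ∧ 1 / 2 ≤ u) := by
  rw [UnitAddCircle.norm_eq]
  rcases le_total u (1 / 2) with h | h
  · left
    refine ⟨?_, h⟩
    rw [abs_sub_round_eq_min]
    rcases eq_or_lt_of_le h1 with h2 | h2
    · linarith
    · rw [Int.fract_eq_self.2 ⟨h0, h2⟩]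
      exact le_min le_rfl (by linarith)
  · right
    refine ⟨?_, h⟩
    rcases eq_or_lt_of_le h1 with h2 | h2
    · have := abs_nonneg (u - round u)
      linarith
    · rw [abs_sub_round_eq_min, Int.fract_eq_self.2 ⟨h0, h2⟩]
      exact le_min (by linarith) le_rfl

/-- Upper bound for the circle norm. -/
lemma circ_upper (u : ℝ) (n : ℤ) : ‖(u : AddCircle (1 : ℝ))‖ ≤ |u - n| := by
  rw [UnitAddCircle.norm_eq]
  exact round_le u n

lemma dist_lower (p s : ℝ) (h0 : p ≤ s) (h1 : s ≤ p + 1) :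
    (s - p ≤ dist (p : AddCircle (1 : ℝ)) (s : AddCircle (1 : ℝ)) ∧ s - p ≤ 1 / 2) ∨
    (1 - (s - p) ≤ dist (p : AddCircle (1 : ℝ)) (s : AddCircle (1 : ℝ)) ∧ 1 / 2 ≤ s - p) := by
  rw [dist_comm, dist_eq_norm, ← AddCircle.coe_sub]
  exact circ_lower _ (by linarith) (by linarith)

lemma dist_lower' (p s : ℝ) (h0 : s ≤ p) (h1 : p ≤ s + 1) :
    (p - s ≤ dist (p : AddCircle (1 : ℝ)) (s : AddCircle (1 : ℝ)) ∧ p - s ≤ 1 / 2) ∨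
    (1 - (p - s) ≤ dist (p : AddCircle (1 : ℝ)) (s : AddCircle (1 : ℝ)) ∧ 1 / 2 ≤ p - s) := by
  rw [dist_eq_norm, ← AddCircle.coe_sub]
  exact circ_lower _ (by linarith) (by linarith)

/-- Distances are bounded by either arc. -/
lemma dist_upper (p q : ℝ) (h : p ≤ q) (h1 : q ≤ p + 1) :
    dist (p : AddCircle (1 : ℝ)) (q : AddCircle (1 : ℝ)) ≤ q - p ∧
    dist (p : AddCircle (1 : ℝ)) (q : AddCircle (1 : ℝ)) ≤ 1 - (q - p) := by
  rw [dist_comm, dist_eq_norm, ← AddCircle.coe_sub]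
  have h2 := circ_upper (q - p) 0
  have h3 := circ_upper (q - p) 1
  push_cast at h2 h3
  rw [abs_of_nonneg (by linarith)] at h2
  rw [abs_of_nonpos (by linarith)] at h3
  exact ⟨by linarith, by linarith⟩

lemma pos0 (d : Fin 5 → ℝ) : pos d 0 = ((0 : ℝ) : AddCircle (1 : ℝ)) := by
  have : (Finset.Iio (0 : Fin 5)) = ∅ := by decide
  simp [pos, this]
lemma pos1 (d : Fin 5 → ℝ) : pos d 1 = ((d 0 : ℝ) : AddCircle (1 : ℝ)) := by
  have : (Finset.Iio (1 : Fin 5)) = {0} := by decide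
  simp [pos, this]
lemma pos2 (d : Fin 5 → ℝ) : pos d 2 = ((d 0 + d 1 : ℝ) : AddCircle (1 : ℝ)) := by
  have : (Finset.Iio (2 : Fin 5)) = {0, 1} := by decide
  rw [pos, this, Finset.sum_pair (by decide)]
lemma pos3 (d : Fin 5 → ℝ) : pos d 3 = ((d 0 + d 1 + d 2 : ℝ) : AddCircle (1 : ℝ)) := by
  have : (Finset.Iio (3 : Fin 5)) = {0, 1, 2} := by decide
  rw [pos, this, Finset.sum_insert (by decide), Finset.sum_pair (by decide), add_assoc]
lemma pos4 (d : Fin 5 → ℝ) : pos d 4 = ((d 0 + d 1 + d 2 + d 3 : ℝ) : AddCircle (1 : ℝ)) := by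
  have : (Finset.Iio (4 : Fin 5)) = {0, 1, 2, 3} := by decide
  rw [pos, this, Finset.sum_insert (by decide), Finset.sum_insert (by decide),
    Finset.sum_pair (by decide)]
  congr 1
  ring

set_option maxHeartbeats 4000000 in
/-- Under the near-equidistance hypothesis, every social cost is at least `9/10`. -/
lemma SC_lower (d : Fin 5 → ℝ) (hl : ∀ i, 1 / 10 ≤ d i) (hu : ∀ i, d i ≤ 3 / 10)
    (hsum : d 0 + d 1 + d 2 + d 3 + d 4 = 1) (a : AddCircle (1 : ℝ)) : 9 / 10 ≤ SC d a := by
  have : Fact ((0 : ℝ) < 1) := ⟨one_pos⟩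
  obtain ⟨s, ⟨hs0, hs1⟩, rfl⟩ : ∃ s ∈ Set.Ico (0 : ℝ) (0 + 1), (s : AddCircle (1 : ℝ)) = a := by
    have := AddCircle.coe_image_Ico_eq (1 : ℝ) 0
    have h : a ∈ (QuotientAddGroup.mk '' Set.Ico (0 : ℝ) (0 + 1) : Set (AddCircle (1 : ℝ))) := by
      rw [this]; trivial
    exact h
  rw [SC, Fin.sum_univ_five, pos0, pos1, pos2, pos3, pos4]
  have l0 := hl 0
  have l1 := hl 1
  have l2 := hl 2
  have l3 := hl 3
  have l4 := hl 4
  have u0 := hu 0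
  have u1 := hu 1
  have u2 := hu 2
  have u3 := hu 3
  have u4 := hu 4
  clear hl hu
  have e0 := dist_lower 0 s hs0 (by linarith)
  have key : ∀ p : ℝ, 0 ≤ p → p ≤ 1 → 
      (p ≤ s ∧ s - p ≤ dist (p : AddCircle (1 : ℝ)) s ∧ s - p ≤ 1 / 2) ∨
      (p ≤ s ∧ 1 - (s - p) ≤ dist (p : AddCircle (1 : ℝ)) s ∧ 1 / 2 ≤ s - p) ∨
      (s ≤ p ∧ p - s ≤ dist (p : AddCircle (1 : ℝ)) s ∧ p - s ≤ 1 / 2) ∨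
      (s ≤ p ∧ 1 - (p - s) ≤ dist (p : AddCircle (1 : ℝ)) s ∧ 1 / 2 ≤ p - s) := by
    intro p hp hp1
    rcases le_total p s with h | h
    · rcases dist_lower p s h (by linarith) with h' | h'
      · exact Or.inl ⟨h, h'⟩
      · exact Or.inr (Or.inl ⟨h, h'⟩)
    · rcases dist_lower' p s h (by linarith) with h' | h'
      · exact Or.inr (Or.inr (Or.inl ⟨h, h'⟩))
      · exact Or.inr (Or.inr (Or.inr ⟨h, h'⟩))
  have k1 := key (d 0) (by linarith) (by linarith)
  have k2 := key (d 0 + d 1) (by linarith) (by linarith)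
  have k3 := key (d 0 + d 1 + d 2) (by linarith) (by linarith)
  have k4 := key (d 0 + d 1 + d 2 + d 3) (by linarith) (by linarith)
  clear key
  generalize dist ((0 : ℝ) : AddCircle (1 : ℝ)) s = D0 at *
  generalize dist ((d 0 : ℝ) : AddCircle (1 : ℝ)) s = D1 at *
  generalize dist ((d 0 + d 1 : ℝ) : AddCircle (1 : ℝ)) s = D2 at *
  generalize dist ((d 0 + d 1 + d 2 : ℝ) : AddCircle (1 : ℝ)) s = D3 at *
  generalize dist ((d 0 + d 1 + d 2 + d 3 : ℝ) : AddCircle (1 : ℝ)) s = D4 at *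
  rcases e0 with ⟨e0, f0⟩ | ⟨e0, f0⟩ <;>
  rcases k1 with ⟨g1, e1, f1⟩ | ⟨g1, e1, f1⟩ | ⟨g1, e1, f1⟩ | ⟨g1, e1, f1⟩ <;>
  first
  | (exfalso; linarith)
  | (rcases k2 with ⟨g2, e2, f2⟩ | ⟨g2, e2, f2⟩ | ⟨g2, e2, f2⟩ | ⟨g2, e2, f2⟩ <;>
     first
     | (exfalso; linarith)
     | (rcases k3 with ⟨g3, e3, f3⟩ | ⟨g3, e3, f3⟩ | ⟨g3, e3, f3⟩ | ⟨g3, e3, f3⟩ <;>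
        first
        | (exfalso; linarith)
        | (rcases k4 with ⟨g4, e4, f4⟩ | ⟨g4, e4, f4⟩ | ⟨g4, e4, f4⟩ | ⟨g4, e4, f4⟩ <;>
           linarith)))

/-- The quadratic form bounding the expected cost. -/
lemma quad_bound (a b c e f : ℝ) (h : a + b + c + e + f = 1) :
    1 + 2 * (a * c + b * e + c * f + e * a + f * b)
      - (a ^ 2 + b ^ 2 + c ^ 2 + e ^ 2 + f ^ 2) ≤ 6 / 5 := by
  obtain rfl : f = 1 - a - b - c - e := by linarith
  nlinarith [sq_nonneg (a + b + c - 3 / 5), sq_nonneg (b + c + e - 3 / 5),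
    sq_nonneg (2 / 5 - a - b), sq_nonneg (2 / 5 - b - c), sq_nonneg (2 / 5 - c - e)]

lemma PCD_upper (d : Fin 5 → ℝ) (hd : ∀ i, 0 ≤ d i)
    (hsum : d 0 + d 1 + d 2 + d 3 + d 4 = 1) : PCD d ≤ 6 / 5 := by
  have l0 := hd 0
  have l1 := hd 1
  have l2 := hd 2
  have l3 := hd 3
  have l4 := hd 4
  have h01 := (dist_upper 0 (d 0) (by linarith) (by linarith)).1
  have h02 := (dist_upper 0 (d 0 + d 1) (by linarith) (by linarith)).1
  have h03 := (dist_upper 0 (d 0 + d 1 + d 2) (by linarith) (by linarith)).2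
  have h04 := (dist_upper 0 (d 0 + d 1 + d 2 + d 3) (by linarith) (by linarith)).2
  have h12 := (dist_upper (d 0) (d 0 + d 1) (by linarith) (by linarith)).1
  have h13 := (dist_upper (d 0) (d 0 + d 1 + d 2) (by linarith) (by linarith)).1
  have h14 := (dist_upper (d 0) (d 0 + d 1 + d 2 + d 3) (by linarith) (by linarith)).2
  have h23 := (dist_upper (d 0 + d 1) (d 0 + d 1 + d 2) (by linarith) (by linarith)).1
  have h24 := (dist_upper (d 0 + d 1) (d 0 + d 1 + d 2 + d 3) (by linarith) (by linarith)).1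
  have h34 := (dist_upper (d 0 + d 1 + d 2) (d 0 + d 1 + d 2 + d 3)
    (by linarith) (by linarith)).1
  rw [← pos0 d] at h01 h02 h03 h04
  rw [← pos1 d] at h01 h12 h13 h14
  rw [← pos2 d] at h02 h12 h23 h24
  rw [← pos3 d] at h03 h13 h23 h34
  rw [← pos4 d] at h04 h14 h24 h34
  have c0 : C d 0 ≤ 1 + d 0 + d 4 - d 2 := by
    rw [C, SC, Fin.sum_univ_five, dist_self, dist_comm (pos d 1), dist_comm (pos d 2),
      dist_comm (pos d 3), dist_comm (pos d 4)]
    linarith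
  have c1 : C d 1 ≤ 1 + d 1 + d 0 - d 3 := by
    rw [C, SC, Fin.sum_univ_five, dist_self, dist_comm (pos d 2),
      dist_comm (pos d 3), dist_comm (pos d 4)]
    linarith
  have c2 : C d 2 ≤ 1 + d 2 + d 1 - d 4 := by
    rw [C, SC, Fin.sum_univ_five, dist_self, dist_comm (pos d 3), dist_comm (pos d 4)]
    linarith
  have c3 : C d 3 ≤ 1 + d 3 + d 2 - d 0 := by
    rw [C, SC, Fin.sum_univ_five, dist_self, dist_comm (pos d 4)]
    linarith
  have c4 : C d 4 ≤ 1 + d 4 + d 3 - d 1 := by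
    rw [C, SC, Fin.sum_univ_five, dist_self]
    linarith
  have q := quad_bound _ _ _ _ _ hsum
  have p0 : P d 0 = d 2 := rfl
  have p1 : P d 1 = d 3 := rfl
  have p2 : P d 2 = d 4 := rfl
  have p3 : P d 3 = d 0 := rfl
  have p4 : P d 4 = d 1 := rfl
  rw [PCD, Fin.sum_univ_five, p0, p1, p2, p3, p4]
  have m0 := mul_le_mul_of_nonneg_left c0 l2
  have m1 := mul_le_mul_of_nonneg_left c1 l3
  have m2 := mul_le_mul_of_nonneg_left c2 l4
  have m3 := mul_le_mul_of_nonneg_left c3 l0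
  have m4 := mul_le_mul_of_nonneg_left c4 l1
  nlinarith

theorem near_equidistant_corollary (d : Fin 5 → ℝ) (hd : ∀ i, 0 ≤ d i)
    (hsum : ∑ i, d i = 1) (hP : ∀ i, |P d i - 1 / 5| ≤ 1 / 10) :
    PCD d ≤ (4 / 3) * OPT d ∧ PCD d ≤ 1.34 * OPT d := by
  rw [Fin.sum_univ_five] at hsum
  have hP' : ∀ i, |d i - 1 / 5| ≤ 1 / 10 := by
    intro i
    have := hP (i - 2)
    rwa [P, sub_add_cancel] at this
  have hO : 9 / 10 ≤ OPT d := by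
    refine le_ciInf fun a => SC_lower d (fun i => ?_) (fun i => ?_) hsum a
    · have := (abs_le.1 (hP' i)).1
      linarith
    · have := (abs_le.1 (hP' i)).2
      linarith
  have hU := PCD_upper d hd hsum
  constructor
  · linarith
  · norm_num
    linarith
end
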